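/- arXiv:1608.04666 — 3 statements merged into one kernel-verified Lean document; each statement's English description precedes it below -/
import Mathlib

section
/- Let F be a field, n ≥ 2, and let A₁ be an invertible (n−1)×(n−1) matrix over F. Then the n×n block diagonal matrix Dg[0₁, A₁] (with a single zero 1×1 block followed by A₁) is a product of two nilpotent n×n matrices over F, each of rank n−1. -/
/-!
An invertible matrix is similar to a product `L * U` of a lower and an upper triangular matrix:
conjugate so that the top left entry is nonzero, split off the first row and column, and apply
induction to the Schur complement, which may be conjugated independently. Hence `Dg[0₁, A₁]` is
similar to `Dg[0₁, L * U] = [0, 0; L, 0] * [0, U; 0, 0]`, where the outer indices are split as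
`1 + k` and the inner ones, those summed over, as `k + 1`. Both factors are strictly triangular.

The ranks are forced: each factor has at least the rank `k` of the product, and is singular.
-/

open Matrix

theorem isUnit_of_isConj {M : Type*} [Monoid M] {a b : M} (hab : IsConj a b) (ha : IsUnit a) :
    IsUnit b := by
  obtain ⟨c, hc⟩ := hab
  rw [← c.isUnit_mul_units, ← hc.eq]
  exact c.isUnit.mul ha

section NilpotentProducts

/-- `a` is the product of two nilpotent elements, a property which `Dg[0₁, A₁]` may be shown to have
after passing to a similar matrix. -/
def IsProductOfTwoNilpotents {M : Type*} [MonoidWithZero M] (a : M) : Prop :=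
  ∃ x y : M, IsNilpotent x ∧ IsNilpotent y ∧ a = x * y

variable {M : Type*} [MonoidWithZero M] {a b : M}

theorem isNilpotent_of_isConj (hab : IsConj a b) (ha : IsNilpotent a) : IsNilpotent b := by
  obtain ⟨n, hn⟩ := ha
  obtain ⟨c, hc⟩ := hab.pow n
  refine ⟨n, c.mul_left_eq_zero.mp ?_⟩
  rw [← hc.eq, hn, mul_zero]

theorem isProductOfTwoNilpotents_of_isConj (hab : IsConj a b) (ha : IsProductOfTwoNilpotents a) :
    IsProductOfTwoNilpotents b := by
  obtain ⟨x, y, hx, hy, rfl⟩ := ha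
  obtain ⟨c, hc⟩ := hab
  have isConj_conj (z : M) : IsConj z (c * z * ↑c⁻¹) := ⟨c, by simp [SemiconjBy, mul_assoc]⟩
  refine ⟨c * x * ↑c⁻¹, c * y * ↑c⁻¹, isNilpotent_of_isConj (isConj_conj x) hx,
    isNilpotent_of_isConj (isConj_conj y) hy, ?_⟩
  rw [← c.mul_left_inj, ← hc.eq]
  simp [mul_assoc]

end NilpotentProducts

section Nilpotent

variable {n : Type*} [Fintype n]

theorem isNilpotent_of_strictly_upper_triangular {R : Type*} [CommRing R] [LinearOrder n]
    {N : Matrix n n R} (hN : ∀ i j, j ≤ i → N i j = 0) : IsNilpotent N := by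
  have hcharpoly : N.charpoly = Polynomial.X ^ Fintype.card n := by
    rw [charpoly_of_isUpperTriangular N fun i j hij => hN i j (le_of_lt hij)]
    simp [hN _ _ le_rfl]
  exact ⟨Fintype.card n, by simpa [hcharpoly] using N.aeval_self_charpoly⟩

theorem rank_lt_card_of_isNilpotent {F : Type*} [Field F] [DecidableEq n] [Nonempty n]
    {N : Matrix n n F} (hN : IsNilpotent N) : N.rank < Fintype.card n := by
  refine lt_of_le_of_ne N.rank_le_card_width fun hrank => hN.not_isUnit ?_
  rw [← mulVec_surjective_iff_isUnit, ← coe_mulVecLin, ← LinearMap.range_eq_top]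
  exact Submodule.eq_top_of_finrank_eq (hrank.trans (Module.finrank_fintype_fun_eq_card F).symm)

end Nilpotent

section Similarity

variable {R m n : Type*} [Fintype m] [DecidableEq m] [Fintype n] [DecidableEq n]

theorem exists_isConj_diag_apply_ne_zero [CommRing R] {A : Matrix n n R} {i j : n}
    (hij : A i j ≠ 0) : ∃ B, IsConj A B ∧ B i i ≠ 0 := by
  by_cases hii : A i i = 0
  · have hne : j ≠ i := by
      rintro rfl
      exact hij hii
    let T (x : R) := transvection j i x
    have hinv (x : R) : T x * T (-x) = 1 := by
      simp [T, transvection_mul_transvection_same _ _ hne]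
    let c : (Matrix n n R)ˣ := ⟨T (-1), T 1, by simpa using hinv (-1), hinv 1⟩
    have hconj : SemiconjBy ↑c A (T (-1) * A * T 1) := by
      simp [SemiconjBy, c, Matrix.mul_assoc, hinv]
    have hdiag : (T (-1) * A * T 1) i i = A i j := by
      simp [T, mul_transvection_apply_same, transvection_mul_apply_of_ne _ _ _ _ hne.symm, hii]
    exact ⟨_, ⟨c, hconj⟩, hdiag ▸ hij⟩
  · exact ⟨A, IsConj.refl A, hii⟩

theorem isConj_fromBlocks [Semiring R] (A : Matrix m m R) (B : Matrix m n R) (C : Matrix n m R)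
    {D D' : Matrix n n R} {P : (Matrix n n R)ˣ} (hP : SemiconjBy ↑P D D') :
    IsConj (fromBlocks A B C D) (fromBlocks A (B * P⁻¹.val) (P.val * C) D') := by
  let c : (Matrix (m ⊕ n) (m ⊕ n) R)ˣ :=
    ⟨fromBlocks 1 0 0 P.val, fromBlocks 1 0 0 P⁻¹.val, by simp [fromBlocks_multiply],
      by simp [fromBlocks_multiply]⟩
  exact ⟨c, by simp [c, SemiconjBy, fromBlocks_multiply, Matrix.mul_assoc, hP.eq]⟩

theorem isConj_reindex [Semiring R] (e : m ≃ n) {A B : Matrix m m R} (hAB : IsConj A B) :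
    IsConj (reindex e e A) (reindex e e B) :=
  MonoidHom.map_isConj (reindexRingEquiv R e).toMonoidHom hAB

end Similarity

section LU

/-- `A` is similar to a matrix with an LU factorization, which makes the matrix `Dg[0₁, A]` similar
to a product of two strictly triangular ones. Neither factor is required to be unitriangular. -/
def IsSimilarToLU {R n : Type*} [Semiring R] [Fintype n] [LinearOrder n] (A : Matrix n n R) :
    Prop :=
  ∃ L U : Matrix n n R, L.IsLowerTriangular ∧ U.IsUpperTriangular ∧ IsConj A (L * U)

theorem isSimilarToLU_of_isConj {R n : Type*} [Semiring R] [Fintype n] [LinearOrder n]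
    {A B : Matrix n n R} (hAB : IsConj A B) (hB : IsSimilarToLU B) : IsSimilarToLU A := by
  obtain ⟨L, U, hL, hU, hconj⟩ := hB
  exact ⟨L, U, hL, hU, hAB.trans hconj⟩

section Blocks

variable {R : Type*} {m n : ℕ}

theorem isUpperTriangular_reindex_fromBlocks [Zero R] {A : Matrix (Fin m) (Fin m) R}
    (hA : A.IsUpperTriangular) (B : Matrix (Fin m) (Fin n) R) {D : Matrix (Fin n) (Fin n) R}
    (hD : D.IsUpperTriangular) :
    (reindex finSumFinEquiv finSumFinEquiv (fromBlocks A B 0 D)).IsUpperTriangular := by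
  rw [IsUpperTriangular, blockTriangular_reindex_iff]
  rintro (i | i) (j | j) hij <;>
    simp only [Function.comp_apply, id_eq, finSumFinEquiv_apply_left, finSumFinEquiv_apply_right,
      Fin.lt_def, Fin.val_castAdd, Fin.val_natAdd] at hij
  · exact hA hij
  · omega
  · rfl
  · exact hD (show j < i by omega)

theorem isLowerTriangular_reindex_fromBlocks [Zero R] {A : Matrix (Fin m) (Fin m) R}
    (hA : A.IsLowerTriangular) (C : Matrix (Fin n) (Fin m) R) {D : Matrix (Fin n) (Fin n) R}
    (hD : D.IsLowerTriangular) :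
    (reindex finSumFinEquiv finSumFinEquiv (fromBlocks A 0 C D)).IsLowerTriangular := by
  simpa [fromBlocks_transpose] using
    (isUpperTriangular_reindex_fromBlocks hA.transpose Cᵀ hD.transpose).transpose

theorem isSimilarToLU_reindex_fromBlocks [Ring R] {A : Matrix (Fin m) (Fin m) R}
    [Invertible A] (hA : A.IsUpperTriangular) (B : Matrix (Fin m) (Fin n) R)
    (C : Matrix (Fin n) (Fin m) R) {D : Matrix (Fin n) (Fin n) R}
    (hD : IsSimilarToLU (D - C * ⅟A * B)) :
    IsSimilarToLU (reindex finSumFinEquiv finSumFinEquiv (fromBlocks A B C D)) := by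
  obtain ⟨L, U, hL, hU, P, hP⟩ := hD
  let B' := B * P⁻¹.val
  let C' := P.val * C
  have hPD : SemiconjBy ↑P D (L * U + C' * ⅟A * B') := by
    have hschur : SemiconjBy ↑P (C * ⅟A * B) (C' * ⅟A * B') := by
      simp [SemiconjBy, B', C', Matrix.mul_assoc]
    simpa using hP.add_right hschur
  have hfactor : fromBlocks A B' C' (L * U + C' * ⅟A * B') =
      fromBlocks 1 0 (C' * ⅟A) L * fromBlocks A B' 0 U := by
    simp [fromBlocks_multiply, Matrix.mul_assoc, add_comm]
  refine ⟨_, _, isLowerTriangular_reindex_fromBlocks blockTriangular_one (C' * ⅟A) hL,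
    isUpperTriangular_reindex_fromBlocks hA B' hU, ?_⟩
  rw [← coe_reindexRingEquiv R, ← map_mul, ← hfactor]
  exact isConj_reindex finSumFinEquiv (isConj_fromBlocks A B C hPD)

end Blocks

theorem isSimilarToLU_of_isUnit {F : Type*} [Field F] {k : ℕ} {A : Matrix (Fin k) (Fin k) F}
    (hA : IsUnit A) : IsSimilarToLU A := by
  induction k with
  | zero => exact ⟨1, 1, blockTriangular_one, blockTriangular_one, by simp [Subsingleton.elim A 1]⟩
  | succ k ih =>
    revert A
    rw [add_comm k 1]
    intro A hA
    let e : Fin 1 ⊕ Fin k ≃ Fin (1 + k) := finSumFinEquiv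
    obtain ⟨j, hj⟩ : ∃ j, A (e (Sum.inl 0)) j ≠ 0 := by
      by_contra! hrow
      exact ((isUnit_iff_isUnit_det A).mp hA).ne_zero (det_eq_zero_of_row_eq_zero _ hrow)
    obtain ⟨B, hAB, hpivot⟩ := exists_isConj_diag_apply_ne_zero hj
    obtain ⟨B, rfl⟩ := (reindex e e).surjective B
    have hB : IsUnit (fromBlocks B.toBlocks₁₁ B.toBlocks₁₂ B.toBlocks₂₁ B.toBlocks₂₂) := by
      rw [fromBlocks_toBlocks, ← isUnit_map_iff (reindexRingEquiv F e)]
      exact isUnit_of_isConj hAB hA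
    have : Invertible B.toBlocks₁₁ := invertibleOfIsUnitDet _ <| by
      simpa [toBlocks₁₁] using hpivot
    have htriangular : B.toBlocks₁₁.IsUpperTriangular :=
      fun i j hij => (hij.ne (Subsingleton.elim j i)).elim
    have hschur := ih (isUnit_fromBlocks_iff_of_invertible₁₁.mp hB)
    apply isSimilarToLU_of_isConj hAB
    rw [← B.fromBlocks_toBlocks]
    exact isSimilarToLU_reindex_fromBlocks htriangular _ _ hschur

end LU

section Shift

variable {R : Type*} {k : ℕ}

/-- The matrix `[0, U; 0, 0]` with rows split as `k + 1` and columns as `1 + k`: the entries of `U`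
move one column to the right, so that an upper triangular `U` gives a nilpotent matrix. -/
def shiftRight [Zero R] (U : Matrix (Fin k) (Fin k) R) : Matrix (Fin (1 + k)) (Fin (1 + k)) R :=
  reindex (finSumFinEquiv.trans (finCongr (add_comm k 1))) finSumFinEquiv
    (fromBlocks 0 U 0 0 : Matrix (Fin k ⊕ Fin 1) (Fin 1 ⊕ Fin k) R)

theorem isNilpotent_shiftRight [CommRing R] {U : Matrix (Fin k) (Fin k) R}
    (hU : U.IsUpperTriangular) :
    IsNilpotent (shiftRight U) := by
  let rows : Fin k ⊕ Fin 1 ≃ Fin (1 + k) := finSumFinEquiv.trans (finCongr (add_comm k 1))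
  let cols : Fin 1 ⊕ Fin k ≃ Fin (1 + k) := finSumFinEquiv
  have hentry (i : Fin k ⊕ Fin 1) (j : Fin 1 ⊕ Fin k) :
      shiftRight U (rows i) (cols j) = fromBlocks 0 U 0 0 i j := by
    simp [shiftRight, rows, cols]
  apply isNilpotent_of_strictly_upper_triangular
  rw [rows.surjective.forall]
  intro i
  rw [cols.surjective.forall]
  intro j hij
  rw [hentry]
  rcases i with i | i <;> rcases j with j | j
  · rfl
  · have hlt : j < i := by
      simp only [rows, cols, Equiv.trans_apply, finSumFinEquiv_apply_left,
        finSumFinEquiv_apply_right, finCongr_apply, Fin.le_def, Fin.val_cast, Fin.val_castAdd,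
        Fin.val_natAdd] at hij
      omega
    exact hU hlt
  · rfl
  · rfl

theorem transpose_shiftRight_mul_shiftRight [NonUnitalNonAssocSemiring R]
    (L U : Matrix (Fin k) (Fin k) R) :
    (shiftRight Lᵀ)ᵀ * shiftRight U =
      reindex finSumFinEquiv finSumFinEquiv
        (fromBlocks (0 : Matrix (Fin 1) (Fin 1) R) 0 0 (L * U)) := by
  simp only [shiftRight, reindex_apply, transpose_submatrix, fromBlocks_transpose,
    transpose_transpose, transpose_zero, submatrix_mul_equiv, fromBlocks_multiply, Matrix.mul_zero,
    Matrix.zero_mul, add_zero]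

theorem isProductOfTwoNilpotents_reindex_fromBlocks_zero [CommRing R]
    {A : Matrix (Fin k) (Fin k) R} (hA : IsSimilarToLU A) :
    IsProductOfTwoNilpotents (reindex finSumFinEquiv finSumFinEquiv
      (fromBlocks (0 : Matrix (Fin 1) (Fin 1) R) 0 0 A)) := by
  obtain ⟨L, U, hL, hU, P, hP⟩ := hA
  have hLU : IsProductOfTwoNilpotents (reindex finSumFinEquiv finSumFinEquiv
      (fromBlocks (0 : Matrix (Fin 1) (Fin 1) R) 0 0 (L * U))) :=
    ⟨_, _, isNilpotent_transpose_iff.mpr (isNilpotent_shiftRight hL.transpose),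
      isNilpotent_shiftRight hU, (transpose_shiftRight_mul_shiftRight L U).symm⟩
  refine isProductOfTwoNilpotents_of_isConj (isConj_reindex _ ?_) hLU
  simpa using (isConj_fromBlocks 0 0 0 hP).symm

end Shift

theorem rank_le_rank_fromBlocks {R l m n o : Type*} [CommSemiring R] [StrongRankCondition R]
    [Fintype m] [Fintype n] (A : Matrix l m R) (B : Matrix l n R) (C : Matrix o m R)
    (D : Matrix o n R) :
    D.rank ≤ (fromBlocks A B C D).rank :=
  rank_submatrix_le (fromBlocks A B C D) Sum.inr Sum.inr

/-- For `n ≥ 2` (here `n = k + 1` with `k ≥ 1`) and `A₁` an invertible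
`(n-1) × (n-1)` matrix, the block diagonal matrix `Dg[0₁, A₁]` is a product of two
nilpotent `n × n` matrices, each of rank `n - 1`. -/
theorem zero_block_invertible_product_of_nilpotents
    (F : Type*) [Field F] (k : ℕ) (hk : 0 < k)
    (A₁ : Matrix (Fin k) (Fin k) F) (hA₁ : IsUnit A₁) :
    ∃ N₁ N₂ : Matrix (Fin (1 + k)) (Fin (1 + k)) F,
      IsNilpotent N₁ ∧ IsNilpotent N₂ ∧
      Matrix.reindex finSumFinEquiv finSumFinEquiv
          (Matrix.fromBlocks (0 : Matrix (Fin 1) (Fin 1) F) 0 0 A₁) = N₁ * N₂ ∧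
      N₁.rank = k ∧ N₂.rank = k := by
  obtain ⟨N₁, N₂, hN₁, hN₂, hmul⟩ :=
    isProductOfTwoNilpotents_reindex_fromBlocks_zero (isSimilarToLU_of_isUnit hA₁)
  have hrank : k ≤ (N₁ * N₂).rank := by
    calc k = A₁.rank := by rw [rank_of_isUnit A₁ hA₁, Fintype.card_fin]
      _ ≤ (fromBlocks (0 : Matrix (Fin 1) (Fin 1) F) 0 0 A₁).rank := rank_le_rank_fromBlocks ..
      _ = (N₁ * N₂).rank := by rw [← hmul, rank_reindex]
  have hge₁ : k ≤ N₁.rank := hrank.trans (rank_mul_le_left N₁ N₂)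
  have hge₂ : k ≤ N₂.rank := hrank.trans (rank_mul_le_right N₁ N₂)
  have hlt₁ : N₁.rank < 1 + k := by simpa using rank_lt_card_of_isNilpotent hN₁
  have hlt₂ : N₂.rank < 1 + k := by simpa using rank_lt_card_of_isNilpotent hN₂
  exact ⟨N₁, N₂, hN₁, hN₂, hmul, by omega, by omega⟩
end

section
/- Let F be a field, n ≥ 3, and let A₁ be an invertible (n−2)×(n−2) matrix over F. Then the n×n block diagonal matrix Dg[J_2(0), A₁] is a product of two nilpotent n×n matrices over F. -/
/-- The `2 × 2` nilpotent Jordan block `J_2(0)`, with a one in entry `(2,1)`. -/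
def jordanBlock0 (F : Type*) [Field F] (k : ℕ) : Matrix (Fin k) (Fin k) F :=
  Matrix.of fun i j => if (i : ℕ) = (j : ℕ) + 1 then 1 else 0

/-!
A matrix `A ≠ 0` is similar to a product `L * U` with `L` lower triangular, `L₀₀ = 1`, and `U` upper
triangular, `U₀₀ ≠ 0`: conjugate until `A₀₀ ≠ 0`, eliminate, and recurse on the Schur complement.
Since `E₁₀L = E₁₀` and `UE₀₀` is a multiple of `E₀₀`, the unipotent matrix with off-diagonal blocks
`E₁₀` and `U₀₀⁻¹E₀₀` conjugates `Dg[J_2(0), LU]` into `⎡0, -E₁₀U; LE₀₀, LU⎤`. Splitting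
`1 = E₀₀ + J Jᵀ` between `L` and `U`, where `J = J_k(0)`, this matrix is the product of
`⎡-J_2(0), 0; L(E₀₀ + E₀₁), LJ⎤` and `⎡J_2(0), E₀₀U; 0, JᵀU⎤`, which are block triangular with
strictly triangular diagonal blocks. If `A = 0`, then `J_2(0) = B * C`, and placing `B` and `C` off
the diagonal gives two square-zero factors.
-/

open Matrix

/-- `x` is a product of two nilpotent elements: a property invariant under similarity, to be
established for block diagonal matrices. -/
def IsNilpotentProduct {M : Type*} [MonoidWithZero M] (x : M) : Prop :=
  ∃ y z : M, IsNilpotent y ∧ IsNilpotent z ∧ x = y * z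

namespace IsNilpotentProduct

variable {M N : Type*} [MonoidWithZero M] [MonoidWithZero N]

theorem map {H : Type*} [FunLike H M N] [MonoidWithZeroHomClass H M N] (f : H) {x : M}
    (hx : IsNilpotentProduct x) : IsNilpotentProduct (f x) := by
  obtain ⟨y, z, hy, hz, rfl⟩ := hx
  exact ⟨f y, f z, hy.map f, hz.map f, map_mul f y z⟩

theorem of_isConj {x x' : M} (h : IsConj x' x) (hx : IsNilpotentProduct x) :
    IsNilpotentProduct x' := by
  obtain ⟨u, hu⟩ := h.symm
  obtain ⟨y, z, ⟨p, hy⟩, ⟨q, hz⟩, rfl⟩ := hx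
  refine ⟨u * y * ↑u⁻¹, u * z * ↑u⁻¹, ⟨p, ?_⟩, ⟨q, ?_⟩, ?_⟩
  · simp [Units.conj_pow, hy]
  · simp [Units.conj_pow, hz]
  · rw [← mul_assoc, Units.eq_mul_inv_iff_mul_eq, ← hu.eq]
    simp [mul_assoc]

end IsNilpotentProduct

section BlockMatrices

variable {R m n : Type*} [Fintype m] [DecidableEq m] [Fintype n] [DecidableEq n]

section Semiring

variable [Semiring R]

theorem exists_fromBlocks_zero₂₁_pow (A : Matrix m m R) (B : Matrix m n R) (D : Matrix n n R)
    (p : ℕ) : ∃ B', fromBlocks A B 0 D ^ p = fromBlocks (A ^ p) B' 0 (D ^ p) := by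
  induction p with
  | zero => exact ⟨0, by simp⟩
  | succ p ih =>
    obtain ⟨B', hB'⟩ := ih
    exact ⟨A ^ p * B + B' * D, by simp [pow_succ, hB', fromBlocks_multiply]⟩

theorem isNilpotent_fromBlocks_zero₂₁ {A : Matrix m m R} {D : Matrix n n R}
    (hA : IsNilpotent A) (B : Matrix m n R) (hD : IsNilpotent D) :
    IsNilpotent (fromBlocks A B 0 D) := by
  obtain ⟨p, hp⟩ := hA
  obtain ⟨q, hq⟩ := hD
  obtain ⟨B', hB'⟩ := exists_fromBlocks_zero₂₁_pow A B D (p + q)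
  refine ⟨(p + q) * 2, ?_⟩
  rw [pow_mul, hB', pow_add A, pow_add D, hp, hq]
  simp [sq, fromBlocks_multiply]

theorem isConj_fromBlocks_diagonal_right (A : Matrix m m R) {D D' : Matrix n n R}
    (h : IsConj D D') : IsConj (fromBlocks A 0 0 D) (fromBlocks A 0 0 D') := by
  obtain ⟨u, hu⟩ := h
  let v : (Matrix (m ⊕ n) (m ⊕ n) R)ˣ :=
    ⟨fromBlocks 1 0 0 u, fromBlocks 1 0 0 ↑u⁻¹,
      by simp [fromBlocks_multiply], by simp [fromBlocks_multiply]⟩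
  exact ⟨v, by simp [v, SemiconjBy, fromBlocks_multiply, hu.eq]⟩

theorem isNilpotentProduct_fromBlocks_mul_zero (B : Matrix m n R) (C : Matrix n m R) :
    IsNilpotentProduct (fromBlocks (B * C) 0 0 (0 : Matrix n n R)) :=
  ⟨fromBlocks 0 B 0 0, fromBlocks 0 0 C 0, ⟨2, by simp [sq, fromBlocks_multiply]⟩,
    ⟨2, by simp [sq, fromBlocks_multiply]⟩, by simp [fromBlocks_multiply]⟩

end Semiring

theorem isConj_fromBlocks_of_mul_eq_zero [Ring R] (X : Matrix m n R) (Y : Matrix n m R)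
    (D : Matrix n n R) (hYX : Y * X = 0) :
    IsConj (fromBlocks 0 (-(X * D)) (D * Y) D) (fromBlocks (X * D * Y) 0 0 D) := by
  let v : (Matrix (m ⊕ n) (m ⊕ n) R)ˣ :=
    ⟨fromBlocks 1 X Y 1, fromBlocks (1 + X * Y) (-X) (-Y) 1,
      by simp [fromBlocks_multiply, Matrix.mul_add, ← Matrix.mul_assoc, hYX],
      by simp [fromBlocks_multiply, Matrix.add_mul, Matrix.mul_assoc, hYX]⟩
  have hYXD : Y * (X * D) = 0 := by rw [← Matrix.mul_assoc, hYX, Matrix.zero_mul]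
  have hXDYX : X * D * Y * X = 0 := by rw [Matrix.mul_assoc, hYX, Matrix.mul_zero]
  have hXDY : X * (D * Y) = X * D * Y := (Matrix.mul_assoc X D Y).symm
  refine ⟨v, ?_⟩
  change fromBlocks 1 X Y 1 * _ = _ * fromBlocks 1 X Y 1
  simp [fromBlocks_multiply, hYXD, hXDYX, hXDY]

theorem isNilpotent_fromBlocks_zero₁₂ [CommRing R] {A : Matrix m m R} {D : Matrix n n R}
    (hA : IsNilpotent A) (C : Matrix n m R) (hD : IsNilpotent D) :
    IsNilpotent (fromBlocks A 0 C D) := by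
  rw [← isNilpotent_transpose_iff] at hA hD ⊢
  rw [fromBlocks_transpose, transpose_zero]
  exact isNilpotent_fromBlocks_zero₂₁ hA Cᵀ hD

end BlockMatrices

theorem isNilpotent_of_isUpperTriangular {R n : Type*} [CommRing R] [Fintype n] [LinearOrder n]
    {M : Matrix n n R} (hM : M.IsUpperTriangular) (hdiag : ∀ i, M i i = 0) : IsNilpotent M :=
  ⟨Fintype.card n, by simpa [charpoly_of_isUpperTriangular M hM, hdiag] using aeval_self_charpoly M⟩

section NonzeroEntry

variable {R n : Type*} [Fintype n] [DecidableEq n]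

theorem isConj_submatrix_perm [Semiring R] (A : Matrix n n R) (σ : Equiv.Perm n) :
    IsConj A (A.submatrix σ σ) := by
  let v : (Matrix n n R)ˣ :=
    ⟨σ.permMatrix R, σ⁻¹.permMatrix R, by simp [← permMatrix_mul], by simp [← permMatrix_mul]⟩
  refine ⟨v, ?_⟩
  change σ.permMatrix R * A = A.submatrix σ σ * σ.permMatrix R
  simp [PEquiv.toMatrix_toPEquiv_mul, PEquiv.mul_toMatrix_toPEquiv, ← Function.id_def,
    Function.comp_def]

theorem exists_isConj_diag_ne_zero [CommRing R] {A : Matrix n n R} (hA : A ≠ 0) :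
    ∃ B, IsConj A B ∧ ∃ i, B i i ≠ 0 := by
  by_cases hdiag : ∃ i, A i i ≠ 0
  · exact ⟨A, IsConj.refl A, hdiag⟩
  push Not at hdiag
  obtain ⟨i, j, hij⟩ : ∃ i j, A i j ≠ 0 := by
    by_contra! h
    exact hA (Matrix.ext h)
  have hne : j ≠ i := by
    rintro rfl
    exact hij (hdiag j)
  let v : (Matrix n n R)ˣ :=
    ⟨transvection j i 1, transvection j i (-1),
      by simp [transvection_mul_transvection_same, hne],
      by simp [transvection_mul_transvection_same, hne]⟩
  refine ⟨transvection j i 1 * A * transvection j i (-1), ⟨v, ?_⟩, j, ?_⟩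
  · exact Units.mul_inv_eq_iff_eq_mul (b := v) |>.mp rfl
  · rw [mul_transvection_apply_of_ne _ _ _ _ hne, transvection_mul_apply_same, hdiag j]
    simpa using hij

theorem exists_isConj_apply_self_ne_zero [CommRing R] {A : Matrix n n R} (hA : A ≠ 0) (i : n) :
    ∃ B, IsConj A B ∧ B i i ≠ 0 := by
  obtain ⟨B, hAB, j, hj⟩ := exists_isConj_diag_ne_zero hA
  exact ⟨B.submatrix (Equiv.swap i j) (Equiv.swap i j),
    hAB.trans (isConj_submatrix_perm B _), by simpa using hj⟩

end NonzeroEntry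

/-- The bordered matrix `⎡a, b; c, D⎤`, with corner `a`, top row `b` and left column `c`. It plays
the role of `Matrix.fromBlocks` for the linearly ordered index type `Fin (k + 1)`. -/
def bordered {R : Type*} {k : ℕ} (a : R) (b c : Fin k → R) (D : Matrix (Fin k) (Fin k) R) :
    Matrix (Fin (k + 1)) (Fin (k + 1)) R :=
  of (vecCons (vecCons a b) fun i => vecCons (c i) (D i))

section Bordered

variable {R : Type*} {k : ℕ}

theorem bordered_eta (A : Matrix (Fin (k + 1)) (Fin (k + 1)) R) :
    bordered (A 0 0) (fun j => A 0 j.succ) (fun i => A i.succ 0) (A.submatrix Fin.succ Fin.succ) =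
      A := by
  ext i j
  cases i using Fin.cases <;> cases j using Fin.cases <;> simp [bordered]

theorem bordered_one [Zero R] [One R] : bordered 1 0 0 (1 : Matrix (Fin k) (Fin k) R) = 1 := by
  ext i j
  cases i using Fin.cases <;> cases j using Fin.cases <;>
    simp [bordered, one_apply, Fin.succ_ne_zero, (Fin.succ_ne_zero _).symm]

theorem bordered_mul_bordered [CommSemiring R] (a a' : R) (b b' c c' : Fin k → R)
    (D D' : Matrix (Fin k) (Fin k) R) :
    bordered a b c D * bordered a' b' c' D' =
      bordered (a * a' + b ⬝ᵥ c') (a • b' + b ᵥ* D') (a' • c + D *ᵥ c')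
        (vecMulVec c b' + D * D') := by
  ext i j
  cases i using Fin.cases <;> cases j using Fin.cases <;>
    simp [bordered, mul_apply, Fin.sum_univ_succ, dotProduct, vecMul, mulVec, vecMulVec, mul_comm]

theorem isUpperTriangular_bordered [Zero R] {D : Matrix (Fin k) (Fin k) R}
    (hD : D.IsUpperTriangular) (a : R) (b : Fin k → R) :
    (bordered a b 0 D).IsUpperTriangular := by
  intro i j hij
  cases i using Fin.cases with
  | zero => exact absurd hij (Fin.not_lt_zero j)
  | succ i =>
    cases j using Fin.cases with
    | zero => simp [bordered]
    | succ j => simpa [bordered] using hD (Fin.succ_lt_succ_iff.mp hij)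

theorem isLowerTriangular_bordered [Zero R] {D : Matrix (Fin k) (Fin k) R}
    (hD : D.IsLowerTriangular) (a : R) (c : Fin k → R) :
    (bordered a 0 c D).IsLowerTriangular := by
  intro i j hij
  cases j using Fin.cases with
  | zero => exact absurd hij (Fin.not_lt_zero i)
  | succ j =>
    cases i using Fin.cases with
    | zero => simp [bordered]
    | succ i => simpa [bordered] using hD (Fin.succ_lt_succ_iff.mp hij)

end Bordered

section SingleMul

variable {R m : Type*} [NonUnitalNonAssocSemiring R] [DecidableEq m] {k : ℕ}
  {A : Matrix (Fin (k + 1)) (Fin (k + 1)) R}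

theorem single_mul_of_isLowerTriangular (hA : A.IsLowerTriangular) (i : m) (x : R) :
    single i (0 : Fin (k + 1)) x * A = single i 0 (x * A 0 0) := by
  ext i' j
  rcases eq_or_ne i' i with rfl | hi
  · cases j using Fin.cases with
    | zero => simp
    | succ j =>
      have hAj : A 0 j.succ = 0 := hA j.succ_pos
      simp [hAj, j.succ_ne_zero.symm]
  · simp [hi, hi.symm]

theorem mul_single_of_isUpperTriangular (hA : A.IsUpperTriangular) (j : m) (x : R) :
    A * single (0 : Fin (k + 1)) j x = single 0 j (A 0 0 * x) := by
  ext i j'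
  rcases eq_or_ne j' j with rfl | hj
  · cases i using Fin.cases with
    | zero => simp
    | succ i =>
      have hAi : A i.succ 0 = 0 := hA i.succ_pos
      simp [hAi, i.succ_ne_zero.symm]
  · simp [hj, hj.symm]

end SingleMul

section Field

variable {F : Type*} [Field F] {k : ℕ}

theorem exists_isConj_bordered_lower_mul_upper {a : F} (ha : a ≠ 0) (b c : Fin k → F)
    (D : Matrix (Fin k) (Fin k) F) {L U : Matrix (Fin k) (Fin k) F}
    (h : IsConj (D - a⁻¹ • vecMulVec c b) (L * U)) :
    ∃ b' c', IsConj (bordered a b c D) (bordered 1 0 c' L * bordered a b' 0 U) := by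
  obtain ⟨u, hu⟩ := h
  let Q : Matrix (Fin k) (Fin k) F := u
  let v : (Matrix (Fin (k + 1)) (Fin (k + 1)) F)ˣ :=
    ⟨bordered 1 0 0 Q, bordered 1 0 0 ↑u⁻¹, by simp [Q, bordered_mul_bordered, bordered_one],
      by simp [Q, bordered_mul_bordered, bordered_one]⟩
  have hQD : Q * D = a⁻¹ • vecMulVec (Q *ᵥ c) b + L * U * Q := by
    rw [← hu.eq, Matrix.mul_sub, Matrix.mul_smul, mul_vecMulVec]
    abel
  refine ⟨b ᵥ* (↑u⁻¹ : Matrix (Fin k) (Fin k) F), a⁻¹ • Q *ᵥ c, v, ?_⟩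
  change bordered 1 0 0 Q * _ = _ * bordered 1 0 0 Q
  simp [Q, bordered_mul_bordered, hQD, ha, vecMulVec_mul, Matrix.add_mul, smul_smul]

theorem exists_isConj_lower_mul_upper (A : Matrix (Fin (k + 1)) (Fin (k + 1)) F) :
    ∃ L U : Matrix (Fin (k + 1)) (Fin (k + 1)) F, IsConj A (L * U) ∧
      L.IsLowerTriangular ∧ L 0 0 = 1 ∧ U.IsUpperTriangular ∧ (A ≠ 0 → U 0 0 ≠ 0) := by
  induction k with
  | zero =>
    refine ⟨1, A, by rw [one_mul], blockTriangular_one, one_apply_eq 0,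
      fun i j hij => absurd hij (by simp [Fin.fin_one_eq_zero]), fun hA h00 => hA ?_⟩
    ext i j
    rw [Fin.fin_one_eq_zero i, Fin.fin_one_eq_zero j]
    exact h00
  | succ k ih =>
    by_cases hA : A = 0
    · exact ⟨1, 0, by rw [hA, mul_zero], blockTriangular_one, one_apply_eq 0, blockTriangular_zero,
        absurd hA⟩
    obtain ⟨B, hAB, hB⟩ := exists_isConj_apply_self_ne_zero hA 0
    obtain ⟨L, U, hLU, hL, -, hU, -⟩ :=
      ih (B.submatrix Fin.succ Fin.succ -
        (B 0 0)⁻¹ • vecMulVec (fun i => B i.succ 0) fun j => B 0 j.succ)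
    obtain ⟨b', c', hconj⟩ := exists_isConj_bordered_lower_mul_upper hB _ _ _ hLU
    rw [bordered_eta] at hconj
    exact ⟨_, _, hAB.trans hconj, isLowerTriangular_bordered hL _ _, rfl,
      isUpperTriangular_bordered hU _ _, fun _ => hB⟩

theorem jordanBlock0_two : jordanBlock0 F 2 = single 1 0 1 := by
  ext i j
  fin_cases i <;> fin_cases j <;> simp [jordanBlock0]

theorem single_add_jordanBlock0_mul_transpose :
    single (0 : Fin (k + 1)) (0 : Fin (k + 1)) (1 : F) +
      jordanBlock0 F (k + 1) * (jordanBlock0 F (k + 1))ᵀ = 1 := by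
  ext i j
  cases i using Fin.cases with
  | zero => cases j using Fin.cases <;> simp [jordanBlock0, mul_apply, one_apply, single_apply]
  | succ i =>
    rw [Matrix.add_apply, mul_apply, Finset.sum_eq_single i.castSucc]
    · simp [jordanBlock0, one_apply, Fin.ext_iff, eq_comm (a := (j : ℕ))]
    · intro l _ hl
      have hil : (i : ℕ) ≠ l := fun h => hl (Fin.ext h.symm)
      simp [jordanBlock0, hil]
    · simp

theorem isNilpotent_jordanBlock0_transpose_mul {U : Matrix (Fin k) (Fin k) F}
    (hU : U.IsUpperTriangular) : IsNilpotent ((jordanBlock0 F k)ᵀ * U) := by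
  have hzero : ∀ i j, j ≤ i → ((jordanBlock0 F k)ᵀ * U) i j = 0 := by
    intro i j hji
    rw [mul_apply]
    refine Finset.sum_eq_zero fun l _ => ?_
    by_cases hl : (l : ℕ) = i + 1
    · have hjl : j < l := by omega
      rw [hU hjl, mul_zero]
    · simp [jordanBlock0, hl]
  exact isNilpotent_of_isUpperTriangular (fun i j hji => hzero i j hji.le) fun i => hzero i i le_rfl

theorem isNilpotent_mul_jordanBlock0 {L : Matrix (Fin k) (Fin k) F}
    (hL : L.IsLowerTriangular) : IsNilpotent (L * jordanBlock0 F k) := by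
  rw [← isNilpotent_transpose_iff, transpose_mul]
  exact isNilpotent_jordanBlock0_transpose_mul hL.transpose

theorem isNilpotentProduct_fromBlocks_lower_mul_upper {L U : Matrix (Fin (k + 1)) (Fin (k + 1)) F}
    (hL : L.IsLowerTriangular) (hU : U.IsUpperTriangular) :
    IsNilpotentProduct (fromBlocks 0 (-(single (1 : Fin 2) (0 : Fin (k + 1)) (1 : F) * U))
      (L * single (0 : Fin (k + 1)) (0 : Fin 2) (1 : F)) (L * U)) := by
  have hJ : IsNilpotent (jordanBlock0 F 2) := by
    simpa using isNilpotent_mul_jordanBlock0 (F := F) (k := 2) blockTriangular_one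
  let J := jordanBlock0 F (k + 1)
  let S : Matrix (Fin (k + 1)) (Fin 2) F := single 0 0 1 + single 0 1 1
  let T : Matrix (Fin 2) (Fin (k + 1)) F := single 0 0 1
  refine ⟨fromBlocks (-jordanBlock0 F 2) 0 (L * S) (L * J),
    fromBlocks (jordanBlock0 F 2) (T * U) 0 (Jᵀ * U),
    isNilpotent_fromBlocks_zero₁₂ hJ.neg _ (isNilpotent_mul_jordanBlock0 hL),
    isNilpotent_fromBlocks_zero₂₁ hJ _ (isNilpotent_jordanBlock0_transpose_mul hU), ?_⟩
  rw [fromBlocks_multiply, fromBlocks_inj, jordanBlock0_two]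
  refine ⟨by simp, by simp [T, ← Matrix.mul_assoc],
    by simp [S, Matrix.mul_assoc, Matrix.add_mul], ?_⟩
  have hST : S * T = single 0 0 1 := by simp [S, T, Matrix.add_mul]
  calc L * U = L * (S * T + J * Jᵀ) * U := by
        rw [hST, single_add_jordanBlock0_mul_transpose, Matrix.mul_one]
    _ = L * S * (T * U) + L * J * (Jᵀ * U) := by
        simp only [Matrix.mul_add, Matrix.add_mul, Matrix.mul_assoc]

theorem isNilpotentProduct_fromBlocks_jordanBlock0 (A : Matrix (Fin (k + 1)) (Fin (k + 1)) F) :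
    IsNilpotentProduct (fromBlocks (jordanBlock0 F 2) 0 0 A) := by
  by_cases hA : A = 0
  · have hJ : jordanBlock0 F 2 =
        single 1 (0 : Fin (k + 1)) (1 : F) * single (0 : Fin (k + 1)) 0 (1 : F) := by
      simp [jordanBlock0_two]
    rw [hA, hJ]
    exact isNilpotentProduct_fromBlocks_mul_zero _ _
  obtain ⟨L, U, hAL, hL, hL0, hU, hU0⟩ := exists_isConj_lower_mul_upper A
  let X : Matrix (Fin 2) (Fin (k + 1)) F := single 1 0 1
  let Y : Matrix (Fin (k + 1)) (Fin 2) F := single 0 0 (U 0 0)⁻¹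
  have hXL : X * (L * U) = X * U := by
    rw [← Matrix.mul_assoc, single_mul_of_isLowerTriangular hL, hL0, mul_one]
  have hUY : U * Y = single 0 0 1 := by
    rw [mul_single_of_isUpperTriangular hU, mul_inv_cancel₀ (hU0 hA)]
  have hXUY : X * U * Y = jordanBlock0 F 2 := by
    rw [Matrix.mul_assoc, hUY, single_mul_single_same, mul_one, jordanBlock0_two]
  have hconj := isConj_fromBlocks_of_mul_eq_zero X Y (L * U) (by simp [X, Y])
  rw [hXL, hXUY, Matrix.mul_assoc, hUY] at hconj
  exact ((isNilpotentProduct_fromBlocks_lower_mul_upper hL hU).of_isConj hconj.symm).of_isConj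
    (isConj_fromBlocks_diagonal_right _ hAL)

end Field

theorem j2_invertible_block_product_of_nilpotents_general
    (F : Type*) [Field F] (k : ℕ) (hk : 0 < k) (A₁ : Matrix (Fin k) (Fin k) F) :
    ∃ N₁ N₂ : Matrix (Fin (2 + k)) (Fin (2 + k)) F,
      IsNilpotent N₁ ∧ IsNilpotent N₂ ∧
      Matrix.reindex finSumFinEquiv finSumFinEquiv
          (Matrix.fromBlocks (jordanBlock0 F 2) 0 0 A₁) = N₁ * N₂ := by
  obtain ⟨m, rfl⟩ := Nat.exists_eq_succ_of_ne_zero hk.ne'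
  exact (isNilpotentProduct_fromBlocks_jordanBlock0 A₁).map (reindexAlgEquiv F F finSumFinEquiv)

/-- For `n ≥ 3` (here `n = 2 + k` with `k ≥ 1`) and `A₁` an invertible
`(n-2) × (n-2)` matrix, the block diagonal matrix `Dg[J_2(0), A₁]` is a product of two
nilpotent `n × n` matrices. -/
theorem j2_invertible_block_product_of_nilpotents
    (F : Type*) [Field F] (k : ℕ) (hk : 0 < k)
    (A₁ : Matrix (Fin k) (Fin k) F) (hA₁ : IsUnit A₁) :
    ∃ N₁ N₂ : Matrix (Fin (2 + k)) (Fin (2 + k)) F,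
      IsNilpotent N₁ ∧ IsNilpotent N₂ ∧
      Matrix.reindex finSumFinEquiv finSumFinEquiv
          (Matrix.fromBlocks (jordanBlock0 F 2) 0 0 A₁) = N₁ * N₂ :=
  j2_invertible_block_product_of_nilpotents_general F k hk A₁
end

section
/- Let F be a field, let A₀ be a nilpotent m×m matrix over F with m ≥ 3, and let A₁ be an invertible k×k matrix over F. Then the (m+k)×(m+k) block diagonal matrix Dg[A₀, A₁] is a product of two nilpotent (m+k)×(m+k) matrices over F. -/
/-!
The theorem holds for every singular endomorphism `f` in dimension at least three. Call a
factorization `f = N₁ * N₂` into nilpotents transverse if some `κ ∈ ker N₁` lies outside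
`range N₂`. A transverse factorization can be bordered by one row and one column, because the new
diagonal entry is free: adding a multiple of `κ` to the new column of `N₂` changes that entry and
nothing else. Eliminating rows and columns one at a time, as for a Schur complement, thus reduces
the problem to a small compression of `f` of the same rank as the rows and columns it selects.
If `ker f` is not contained in `range f`, this is the zero map on a line. Otherwise it is a
`3 × 3` matrix with two pivots, whose factorization is explicit.
-/

open Module LinearMap

section LinearAlgebra

variable {F V W : Type*}

lemma isNilpotent_comp_comm [Semiring F] [AddCommMonoid V] [Module F V] [AddCommMonoid W]
    [Module F W] {f : V →ₗ[F] W} {g : W →ₗ[F] V} (h : IsNilpotent (g ∘ₗ f : End F V)) :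
    IsNilpotent (f ∘ₗ g : End F W) := by
  obtain ⟨n, hn⟩ := h
  have hpow (n : ℕ) :
      (f ∘ₗ g : End F W) ^ (n + 1) = f ∘ₗ ((g ∘ₗ f : End F V) ^ n : End F V) ∘ₗ g := by
    induction n with
    | zero => rfl
    | succ n ih => rw [pow_succ', ih, pow_succ']; rfl
  exact ⟨n + 1, by rw [hpow, hn, zero_comp, comp_zero]⟩

lemma exists_notMem_and_notMem_of_ne_top [Ring F] [AddCommGroup V] [Module F V]
    {p q : Submodule F V} (hp : p ≠ ⊤) (hq : q ≠ ⊤) : ∃ v, v ∉ p ∧ v ∉ q := by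
  have h : ¬ ((⊤ : Submodule F V) : Set V) ⊆ p ∪ q := by
    rw [AddSubgroupClass.subset_union]
    simp [hp, hq]
  simpa [Set.subset_def] using h

variable [Field F] [AddCommGroup V] [Module F V] [AddCommGroup W] [Module F W]

lemma exists_dual_apply_eq_one_and_ne_zero {x : V} (hx : x ≠ 0) (y : V) :
    ∃ φ : Dual F V, φ x = 1 ∧ (y ≠ 0 → φ y ≠ 0) := by
  have eval_ker_ne_top {z : V} (hz : z ≠ 0) : ker (Dual.eval F V z) ≠ ⊤ := by
    rwa [Ne, LinearMap.ker_eq_top, eval_apply_eq_zero_iff]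
  obtain ⟨α, hαx, hαy⟩ : ∃ α : Dual F V, α x ≠ 0 ∧ (y ≠ 0 → α y ≠ 0) := by
    by_cases hy : y = 0
    · simpa [hy] using exists_notMem_and_notMem_of_ne_top (eval_ker_ne_top hx) (eval_ker_ne_top hx)
    · simpa [hy] using exists_notMem_and_notMem_of_ne_top (eval_ker_ne_top hx) (eval_ker_ne_top hy)
  exact ⟨(α x)⁻¹ • α, by simp [hαx], fun hy => by simp [hαx, hαy hy]⟩

lemma exists_comp_eq_of_ker_le_ker {U : Type*} [AddCommGroup U] [Module F U]
    {f : V →ₗ[F] W} {g : V →ₗ[F] U} (h : ker f ≤ ker g) : ∃ s : W →ₗ[F] U, s ∘ₗ f = g := by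
  obtain ⟨l, hl⟩ := ((ker f).liftQ f le_rfl).exists_leftInverse_of_injective
    (Submodule.ker_liftQ_eq_bot _ _ _ le_rfl)
  refine ⟨(ker f).liftQ g h ∘ₗ l, LinearMap.ext fun v => ?_⟩
  have hlv : l (f v) = (ker f).mkQ v := congr($hl ((ker f).mkQ v))
  simp [hlv]

end LinearAlgebra

lemma det_eq_zero_of_isNilpotent {n R : Type*} [Fintype n] [DecidableEq n] [Nonempty n]
    [CommRing R] [IsReduced R] {M : Matrix n n R} (hM : IsNilpotent M) : M.det = 0 := by
  obtain ⟨k, hk⟩ := hM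
  refine eq_zero_of_pow_eq_zero (n := k) ?_
  rw [← Matrix.det_pow, hk, Matrix.det_zero]

section Transverse

variable {F V W : Type*} [Field F] [AddCommGroup V] [Module F V] [AddCommGroup W] [Module F W]

/-- `f` is a product `N₁ * N₂` of two nilpotent endomorphisms with `ker N₁` not contained in
`range N₂`. The last condition is what lets the factorization be extended to larger spaces. -/
def HasTransverseNilpotentFactorization (f : End F V) : Prop :=
  ∃ N₁ N₂ : End F V, IsNilpotent N₁ ∧ IsNilpotent N₂ ∧ f = N₁ * N₂ ∧ ¬ ker N₁ ≤ range N₂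

namespace HasTransverseNilpotentFactorization

lemma conj {f : End F V} (hf : HasTransverseNilpotentFactorization f) (e : V ≃ₗ[F] W) :
    HasTransverseNilpotentFactorization (e.conj f) := by
  obtain ⟨N₁, N₂, hN₁, hN₂, rfl, hker⟩ := hf
  obtain ⟨κ, hκ, hκN₂⟩ := SetLike.not_le_iff_exists.1 hker
  refine ⟨e.conj N₁, e.conj N₂, hN₁.map e.conjRingEquiv, hN₂.map e.conjRingEquiv,
    map_mul e.conjRingEquiv N₁ N₂, SetLike.not_le_iff_exists.2 ⟨e κ, ?_, ?_⟩⟩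
  · simpa using hκ
  · rintro ⟨v, hv⟩
    exact hκN₂ ⟨e.symm v, e.injective (by simpa using hv)⟩

/-- The lower right entry `s (f t) + c` is arbitrary: `c` is realized by adding `c • κ` to the new
column of `N₂`, where `κ ∈ ker N₁` is detected by a functional `ψ` vanishing on `range N₂`, and by
adding `ψ` to the new row of `N₁`. -/
lemma border {f : End F V} (hf : HasTransverseNilpotentFactorization f) (s : Dual F V) (t : V)
    (c : F) :
    HasTransverseNilpotentFactorization
      ((f.prod (s ∘ₗ f)).coprod (toSpanSingleton F (V × F) (f t, s (f t) + c))) := by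
  obtain ⟨N₁, N₂, hN₁, hN₂, rfl, hker⟩ := hf
  obtain ⟨κ, hκ, hκN₂⟩ := SetLike.not_le_iff_exists.1 hker
  rw [mem_ker] at hκ
  obtain ⟨ψ₀, hψ₀κ, hψ₀N₂⟩ := Submodule.exists_le_ker_of_notMem hκN₂
  obtain ⟨ψ, hψκ, hψN₂⟩ : ∃ ψ : Dual F V, ψ κ = 1 ∧ ∀ v, ψ (N₂ v) = 0 :=
    ⟨(ψ₀ κ)⁻¹ • ψ₀, by simp [hψ₀κ], fun v => by simp [mem_ker.1 (hψ₀N₂ (mem_range_self N₂ v))]⟩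
  refine ⟨N₁.prod (s ∘ₗ N₁ + ψ) ∘ₗ fst F V F,
    inl F V F ∘ₗ N₂.coprod (toSpanSingleton F V (N₂ t + c • κ)),
    isNilpotent_comp_comm (by rwa [fst_prod]), isNilpotent_comp_comm (by rwa [coprod_inl]),
    ?_, SetLike.not_le_iff_exists.2 ⟨(0, 1), by simp, by simp⟩⟩
  ext <;> simp [hκ, hψκ, hψN₂]

end HasTransverseNilpotentFactorization

end Transverse

section SchurCompression

variable {F B V : Type*} [Field F] [AddCommGroup B] [Module F B] [AddCommGroup V] [Module F V]

/-- The compression `π ∘ₗ f ∘ₗ ι` of `f` to a retract `B` of `V` has the same kernel as `f ∘ₗ ι` and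
the same range as `π ∘ₗ f`. This is the condition under which `f` has a Schur complement with
respect to the (possibly singular) block `π ∘ₗ f ∘ₗ ι`. -/
structure IsSchurCompression (π : V →ₗ[F] B) (ι : B →ₗ[F] V) (f : End F V) : Prop where
  comp_eq_id : π ∘ₗ ι = .id
  ker_le : ker (π ∘ₗ f ∘ₗ ι) ≤ ker (f ∘ₗ ι)
  range_le : range (π ∘ₗ f) ≤ range (π ∘ₗ f ∘ₗ ι)

namespace IsSchurCompression

variable {π : V →ₗ[F] B} {ι : B →ₗ[F] V} {f : End F V}

lemma apply_apply (h : IsSchurCompression π ι f) (b : B) : π (ι b) = b :=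
  congr($h.comp_eq_id b)

lemma injective (h : IsSchurCompression π ι f) : Function.Injective ι :=
  Function.LeftInverse.injective h.apply_apply

lemma of_comp {C : Type*} [AddCommGroup C] [Module F C] {ρ : B →ₗ[F] C} {j : C →ₗ[F] B}
    (h : IsSchurCompression (ρ ∘ₗ π) (ι ∘ₗ j) f) (hρj : ρ ∘ₗ j = .id) :
    IsSchurCompression ρ j (π ∘ₗ f ∘ₗ ι) where
  comp_eq_id := hρj
  ker_le c hc := by
    have hfc : f (ι (j c)) = 0 := h.ker_le hc
    simp [hfc]
  range_le := by
    rintro _ ⟨b, rfl⟩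
    exact h.range_le ⟨ι b, rfl⟩

lemma exists_schurComplement (h : IsSchurCompression π ι f) :
    ∃ (s : B →ₗ[F] V) (E : End F V),
      (∀ v, f v = s (π (f v)) + E v) ∧ (∀ b, E (ι b) = 0) ∧ ∀ v, π (E v) = 0 := by
  obtain ⟨s, hs⟩ := exists_comp_eq_of_ker_le_ker h.ker_le
  have hsι (b : B) : s (π (f (ι b))) = f (ι b) := congr($hs b)
  have hπs (v : V) : π (s (π (f v))) = π (f v) := by
    obtain ⟨b, hb⟩ := h.range_le ⟨v, rfl⟩
    simp only [comp_apply] at hb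
    rw [← hb, hsι]
  exact ⟨s, f - s ∘ₗ π ∘ₗ f, by simp, by simp [hsι], by simp [hπs]⟩

lemma prod_coprod (h : IsSchurCompression π ι f) {s : B →ₗ[F] V} {E : End F V}
    (hf : ∀ v, f v = s (π (f v)) + E v) (hEι : ∀ b, E (ι b) = 0) {φ : Dual F V} {w : V}
    (hπw : π w = 0) (hφι : ∀ b, φ (ι b) = 0) (hφw : φ w = 1) (hφE : φ (E w) = 0 → E = 0) :
    IsSchurCompression (π.prod φ) (ι.coprod (toSpanSingleton F V w)) f := by
  have hf_add (b : B) (c : F) : f (ι b + c • w) = s (π (f (ι b + c • w))) + c • E w := by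
    conv_lhs => rw [hf]
    simp [hEι]
  refine ⟨?_, ?_, ?_⟩
  · ext <;> simp [h.apply_apply, hπw, hφι, hφw]
  · rintro ⟨b, c⟩ hbc
    have hπ : π (f (ι b + c • w)) = 0 := congr($hbc.1)
    have hφ : φ (f (ι b + c • w)) = 0 := congr($hbc.2)
    rw [hf_add, hπ, map_zero, zero_add, map_smul, smul_eq_mul, mul_eq_zero] at hφ
    have hcE : c • E w = 0 := by
      rcases hφ with hc | hφEw
      · simp [hc]
      · simp [hφE hφEw]
    change f (ι b + c • w) = 0
    rw [hf_add, hπ, hcE, map_zero, add_zero]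
  · rintro _ ⟨v, rfl⟩
    obtain ⟨c, hc⟩ : ∃ c, c * φ (E w) = φ (E v) := by
      rcases eq_or_ne (φ (E w)) 0 with hφEw | hφEw
      · exact ⟨0, by simp [hφE hφEw]⟩
      · exact ⟨φ (E v) / φ (E w), div_mul_cancel₀ _ hφEw⟩
    obtain ⟨b, hb⟩ := h.range_le ⟨v - c • w, rfl⟩
    have hπ : π (f (ι b + c • w)) = π (f v) := by
      have hb' : π (f (ι b)) = π (f (v - c • w)) := hb
      simp [hb']
    have hφ : φ (f (ι b + c • w)) = φ (f v) := calc
      φ (f (ι b + c • w)) = φ (s (π (f v))) + c * φ (E w) := by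
        rw [hf_add, hπ, map_add, map_smul, smul_eq_mul]
      _ = φ (s (π (f v)) + E v) := by rw [hc, map_add]
      _ = φ (f v) := by rw [← hf]
    exact ⟨(b, c), Prod.ext hπ hφ⟩

/-- `w` and `φ` are chosen such that `φ (E w)` is a nonzero entry of the Schur complement `E`, which
serves as the next pivot, unless `E = 0`. -/
lemma exists_prod_coprod (h : IsSchurCompression π ι f) (hdim : finrank F B < finrank F V) :
    ∃ (φ : Dual F V) (w : V),
      IsSchurCompression (π.prod φ) (ι.coprod (toSpanSingleton F V w)) f := by
  have : FiniteDimensional F V := .of_finrank_pos (by omega)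
  have : FiniteDimensional F B := .of_injective ι h.injective
  obtain ⟨s, E, hf, hEι, hπE⟩ := h.exists_schurComplement
  obtain ⟨w, hπw, hw, hEw⟩ : ∃ w, π w = 0 ∧ w ≠ 0 ∧ (E w = 0 → E = 0) := by
    by_cases hE : E = 0
    · obtain ⟨w, hπw, hw⟩ := Submodule.exists_mem_ne_zero_of_ne_bot (ker_ne_bot_of_finrank_lt hdim)
      exact ⟨w, hπw, hw, fun _ => hE⟩
    · obtain ⟨v, hv⟩ := DFunLike.ne_iff.1 hE
      have hEw : E (v - ι (π v)) ≠ 0 := by simpa [hEι] using hv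
      exact ⟨v - ι (π v), by simp [h.apply_apply], fun hw => hEw (by rw [hw, map_zero]),
        fun h0 => absurd h0 hEw⟩
  obtain ⟨α, hαw, hαEw⟩ := exists_dual_apply_eq_one_and_ne_zero (F := F) hw (E w)
  refine ⟨α - α ∘ₗ ι ∘ₗ π, w, h.prod_coprod hf hEι hπw (by simp [h.apply_apply])
    (by simp [hπw, hαw]) fun hφEw => hEw ?_⟩
  by_contra hEw0
  exact hαEw hEw0 (by simpa [hπE] using hφEw)

lemma hasTransverseNilpotentFactorization_of_fst_inl {g : End F (B × F)}
    (h : IsSchurCompression (fst F B F) (inl F B F) g)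
    (hg : HasTransverseNilpotentFactorization (fst F B F ∘ₗ g ∘ₗ inl F B F)) :
    HasTransverseNilpotentFactorization g := by
  obtain ⟨s, E, hf, hEι, -⟩ := h.exists_schurComplement
  have hs (b : B) : s (g (b, 0)).1 = g (b, 0) := by
    have hb := hf (inl F B F b)
    rw [hEι, add_zero] at hb
    exact hb.symm
  obtain ⟨t, ht⟩ : ∃ t, (g (t, 0)).1 = (g (0, 1)).1 := h.range_le ⟨(0, 1), rfl⟩
  convert hg.border (snd F B F ∘ₗ s) t ((g (0, 1)).2 - (g (t, 0)).2) using 1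
  ext <;> simp [← ht, hs]

end IsSchurCompression

theorem IsSchurCompression.hasTransverseNilpotentFactorization.{u, v} {F : Type u} [Field F]
    {V : Type v} [AddCommGroup V] [Module F V] [FiniteDimensional F V] {B : Type u}
    [AddCommGroup B] [Module F B] {π : V →ₗ[F] B} {ι : B →ₗ[F] V} {f : End F V}
    (h : IsSchurCompression π ι f)
    (hf : HasTransverseNilpotentFactorization (π ∘ₗ f ∘ₗ ι)) :
    HasTransverseNilpotentFactorization f := by
  have : FiniteDimensional F B := .of_injective ι h.injective
  obtain hdim | hdim := (finrank_le_finrank_of_injective h.injective).lt_or_eq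
  · obtain ⟨φ, w, h'⟩ := h.exists_prod_coprod hdim
    have hfst : fst F B F ∘ₗ π.prod φ = π := fst_prod _ _
    have hinl : ι.coprod (toSpanSingleton F V w) ∘ₗ inl F B F = ι := coprod_inl _ _
    refine h'.hasTransverseNilpotentFactorization
      (hasTransverseNilpotentFactorization_of_fst_inl
        (of_comp (by rwa [hfst, hinl]) (fst_comp_inl ..)) ?_)
    rw [comp_assoc, comp_assoc, hinl, ← comp_assoc, hfst]
    exact hf
  · let e : B ≃ₗ[F] V :=
      .ofBijective ι
        ⟨h.injective, (injective_iff_surjective_of_finrank_eq_finrank hdim).1 h.injective⟩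
    have hπ (v : V) : ι (π v) = v := by
      obtain ⟨b, rfl⟩ := e.surjective v
      exact congr(ι $(h.apply_apply b))
    convert hf.conj e
    ext v
    change f v = ι (π (f (ι (e.symm v))))
    rw [hπ, show ι (e.symm v) = v from e.apply_symm_apply v]
termination_by finrank F V - finrank F B
decreasing_by
  rw [finrank_prod, finrank_self]
  omega

end SchurCompression

section Matrix3

variable {F : Type*} [Field F]

lemma hasTransverseNilpotentFactorization_toLin'_three (a c d : F) :
    HasTransverseNilpotentFactorization (Matrix.toLin' !![0, a, 0; 0, c, d; 0, 0, 0]) := by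
  refine ⟨Matrix.toLin' !![0, 0, 1; 1, 0, 0; 0, 0, 0], Matrix.toLin' !![0, c, d; 0, 0, 0; 0, a, 0],
    ?_, ?_, ?_, SetLike.not_le_iff_exists.2 ⟨![0, 1, 0], ?_, ?_⟩⟩
  · rw [Matrix.isNilpotent_toLin'_iff]
    exact ⟨3, by ext i j; fin_cases i <;> fin_cases j <;> simp [pow_succ]⟩
  · rw [Matrix.isNilpotent_toLin'_iff]
    exact ⟨3, by ext i j; fin_cases i <;> fin_cases j <;> simp [pow_succ]⟩
  · rw [Module.End.mul_eq_comp, ← Matrix.toLin'_mul]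
    simp
  · ext i; fin_cases i <;> simp [Matrix.vecHead, Matrix.vecTail]
  · rintro ⟨v, hv⟩
    simpa using congr_fun hv 1

end Matrix3

section Pivots

variable {F V : Type*} [Field F] [AddCommGroup V] [Module F V] {f : End F V}

lemma exists_biorthogonal_pivots {e : V} {ψ : Dual F V} (he : e ≠ 0) (hfe : f e = 0)
    (hψf : ∀ v, ψ (f v) = 0) (hψe : ψ e = 0) {u g : V} (hψu : ψ u = 0) (hfu : f u ≠ 0)
    (hψg : ψ g = 1) (hfg : f g ∉ Submodule.span F {f u}) :
    ∃ (v : Fin 3 → V) (p : Fin 3 → Dual F V) (a c d : F), a ≠ 0 ∧ d ≠ 0 ∧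
      f (v 0) = 0 ∧ (∀ x, p 2 (f x) = 0) ∧ Matrix.of (fun i j => p i (v j)) = 1 ∧
      Matrix.of (fun i j => p i (f (v j))) = !![0, a, 0; 0, c, d; 0, 0, 0] := by
  obtain ⟨α, hαe, hαfu⟩ := exists_dual_apply_eq_one_and_ne_zero (F := F) he (f u)
  obtain ⟨b, hfb, hαb, hψb⟩ : ∃ b, f b = f u ∧ α b = 0 ∧ ψ b = 0 :=
    ⟨u - α u • e, by simp [hfe], by simp [hαe], by simp [hψu, hψe]⟩
  obtain ⟨h, hψh, hαfh, hfh⟩ : ∃ h, ψ h = 1 ∧ α (f h) = 0 ∧ f h ≠ 0 := by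
    refine ⟨g - (α (f g) / α (f u)) • b, by simp [hψg, hψb], by simp [hfb, hαfu hfu], fun h0 => ?_⟩
    rw [map_sub, map_smul, hfb, sub_eq_zero] at h0
    exact hfg (h0 ▸ Submodule.smul_mem _ _ (Submodule.mem_span_singleton_self _))
  have hb : b ≠ 0 := fun hb => hfu (by rw [← hfb, hb, map_zero])
  obtain ⟨β₀, hβ₀b, hβ₀fh⟩ := exists_dual_apply_eq_one_and_ne_zero (F := F) hb (f h)
  obtain ⟨β, hβe, hβb, hβfh⟩ : ∃ β : Dual F V, β e = 0 ∧ β b = 1 ∧ β (f h) ≠ 0 :=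
    ⟨β₀ - β₀ e • α, by simp [hαe], by simp [hαb, hβ₀b], by simpa [hαfh] using hβ₀fh hfh⟩
  refine ⟨![e, b, h], ![α - α h • ψ, β - β h • ψ, ψ], α (f u), β (f u), β (f h), hαfu hfu, hβfh,
    hfe, hψf, ?_, ?_⟩
  all_goals ext i j; fin_cases i <;> fin_cases j <;> simp [*]

lemma pi_comp_comp_linearCombination {ι κ : Type*} [Fintype κ] [DecidableEq κ] (p : ι → Dual F V)
    (f : End F V) (v : κ → V) :
    LinearMap.pi p ∘ₗ f ∘ₗ Fintype.linearCombination F v =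
      Matrix.toLin' (Matrix.of fun i j => p i (f (v j))) := by
  ext j i
  simp

lemma isSchurCompression_of_biorthogonal_pivots {v : Fin 3 → V} {p : Fin 3 → Dual F V} {a c d : F}
    (ha : a ≠ 0) (hd : d ≠ 0) (hv : f (v 0) = 0) (hp : ∀ x, p 2 (f x) = 0)
    (hpv : Matrix.of (fun i j => p i (v j)) = 1)
    (hpf : Matrix.of (fun i j => p i (f (v j))) = !![0, a, 0; 0, c, d; 0, 0, 0]) :
    IsSchurCompression (LinearMap.pi p) (Fintype.linearCombination F v) f := by
  have hcomp := pi_comp_comp_linearCombination p f v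
  rw [hpf] at hcomp
  refine ⟨?_, fun x hx => ?_, ?_⟩
  · have hid := pi_comp_comp_linearCombination p .id v
    simpa only [id_comp, id_apply, hpv, Matrix.toLin'_one] using hid
  · rw [hcomp, mem_ker] at hx
    have hx₁ : x 1 = 0 := by simpa [ha, Matrix.vecHead, Matrix.vecTail] using congr_fun hx 0
    have hx₂ : x 2 = 0 := by simpa [hd, hx₁, Matrix.vecHead, Matrix.vecTail] using congr_fun hx 1
    simp [Fintype.linearCombination_apply, Fin.sum_univ_three, hx₁, hx₂, hv]
  · rw [hcomp]
    rintro _ ⟨w, rfl⟩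
    refine ⟨![0, p 0 (f w) / a, (p 1 (f w) - p 0 (f w) / a * c) / d], ?_⟩
    ext i
    fin_cases i <;> simp [hp, Matrix.vecHead, Matrix.vecTail, ha, hd]

end Pivots

section Singular

variable {F V : Type*} [Field F] [AddCommGroup V] [Module F V] {f : End F V}

lemma hasTransverseNilpotentFactorization_of_not_ker_le_range [FiniteDimensional F V]
    (hf : ¬ ker f ≤ range f) : HasTransverseNilpotentFactorization f := by
  obtain ⟨e, he, hef⟩ := SetLike.not_le_iff_exists.1 hf
  obtain ⟨ψ, hψe, hψf⟩ := Submodule.exists_le_ker_of_notMem hef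
  have hψf0 : ψ ∘ₗ f = 0 := range_le_ker_iff.1 hψf
  have hfe0 : f ∘ₗ toSpanSingleton F V e = 0 := by ext; simpa using he
  have h : IsSchurCompression ((ψ e)⁻¹ • ψ) (toSpanSingleton F V e) f := by
    refine ⟨?_, ?_, ?_⟩
    · ext
      simp [hψe]
    · simp [hfe0]
    · simp [smul_comp, hψf0]
  refine h.hasTransverseNilpotentFactorization ?_
  rw [hfe0, comp_zero]
  exact ⟨0, 0, .zero, .zero, (mul_zero 0).symm, by simp⟩

lemma exists_dual_split_of_two_le_finrank_range [FiniteDimensional F V] {ψ : Dual F V}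
    (hψ : ψ ≠ 0) (hf : 2 ≤ finrank F (range f)) :
    ∃ u g : V, ψ u = 0 ∧ f u ≠ 0 ∧ ψ g = 1 ∧ f g ∉ Submodule.span F {f u} := by
  obtain ⟨u, hψu, hfu⟩ : ∃ u ∈ ker ψ, u ∉ ker f := by
    refine SetLike.not_le_iff_exists.1 fun hle => ?_
    have := Submodule.finrank_mono hle
    have := Dual.finrank_ker_add_one_of_ne_zero hψ
    have := finrank_range_add_finrank_ker f
    omega
  have hspan : (Submodule.span F {f u}).comap f ≠ ⊤ := by
    intro htop
    have hle : range f ≤ Submodule.span F {f u} := by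
      rintro _ ⟨v, rfl⟩
      exact Submodule.mem_comap.1 (htop ▸ Submodule.mem_top)
    have := (Submodule.finrank_mono hle).trans (finrank_span_singleton hfu).le
    omega
  obtain ⟨g, hψg, hfg⟩ :=
    exists_notMem_and_notMem_of_ne_top (mt LinearMap.ker_eq_top.1 hψ) hspan
  rw [mem_ker] at hψg
  refine ⟨u, (ψ g)⁻¹ • g, hψu, hfu, by simp [hψg], ?_⟩
  rwa [map_smul, Submodule.smul_mem_iff _ (inv_ne_zero hψg)]

lemma hasTransverseNilpotentFactorization_of_ker_ne_bot (hdim : 3 ≤ finrank F V)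
    (hf : ker f ≠ ⊥) : HasTransverseNilpotentFactorization f := by
  have : FiniteDimensional F V := .of_finrank_pos (by omega)
  by_cases hle : ker f ≤ range f
  · obtain ⟨e, hfe, he⟩ := Submodule.exists_mem_ne_zero_of_ne_bot hf
    have hrange : range f < ⊤ := lt_top_iff_ne_top.2 (mt ker_eq_bot_iff_range_eq_top.2 hf)
    obtain ⟨ψ, hψ, hψf⟩ := Submodule.exists_le_ker_of_lt_top _ hrange
    have hrank : 2 ≤ finrank F (range f) := by
      have := Submodule.finrank_mono hle
      have := finrank_range_add_finrank_ker f
      omega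
    obtain ⟨u, g, hψu, hfu, hψg, hfg⟩ := exists_dual_split_of_two_le_finrank_range hψ hrank
    obtain ⟨v, p, a, c, d, ha, hd, hv, hp, hpv, hpf⟩ := exists_biorthogonal_pivots he hfe
      (fun x => hψf ⟨x, rfl⟩) (hψf (hle hfe)) hψu hfu hψg hfg
    refine (isSchurCompression_of_biorthogonal_pivots ha hd hv hp hpv
      hpf).hasTransverseNilpotentFactorization ?_
    rw [pi_comp_comp_linearCombination, hpf]
    exact hasTransverseNilpotentFactorization_toLin'_three a c d
  · exact hasTransverseNilpotentFactorization_of_not_ker_le_range hle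

end Singular

theorem nilpotent_invertible_block_product_of_nilpotents_general {F n : Type*} [Field F] [Fintype n]
    [DecidableEq n] (hn : 3 ≤ Fintype.card n) {M : Matrix n n F} (hM : M.det = 0) :
    ∃ N₁ N₂ : Matrix n n F, IsNilpotent N₁ ∧ IsNilpotent N₂ ∧ M = N₁ * N₂ := by
  have hker : ker (Matrix.toLin' M) ≠ ⊥ := by
    obtain ⟨v, hv, hMv⟩ := Matrix.exists_mulVec_eq_zero_iff.2 hM
    exact (Submodule.ne_bot_iff _).2 ⟨v, by simpa using hMv, hv⟩
  obtain ⟨N₁, N₂, hN₁, hN₂, hMN, -⟩ :=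
    hasTransverseNilpotentFactorization_of_ker_ne_bot (by simpa using hn) hker
  refine ⟨toMatrixAlgEquiv' N₁, toMatrixAlgEquiv' N₂, hN₁.map toMatrixAlgEquiv',
    hN₂.map toMatrixAlgEquiv', ?_⟩
  rw [← map_mul, ← hMN]
  exact (toMatrix'_toLin' M).symm

/-- For `A₀` a nilpotent `m × m` matrix with `m ≥ 3` and `A₁` an invertible `k × k`
matrix, the block diagonal matrix `Dg[A₀, A₁]` is a product of two nilpotent
`(m + k) × (m + k)` matrices. -/
theorem nilpotent_invertible_block_product_of_nilpotents
    (F : Type*) [Field F] (m k : ℕ) (hm : 3 ≤ m)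
    (A₀ : Matrix (Fin m) (Fin m) F) (hA₀ : IsNilpotent A₀)
    (A₁ : Matrix (Fin k) (Fin k) F) (hA₁ : IsUnit A₁) :
    ∃ N₁ N₂ : Matrix (Fin (m + k)) (Fin (m + k)) F,
      IsNilpotent N₁ ∧ IsNilpotent N₂ ∧
      Matrix.reindex finSumFinEquiv finSumFinEquiv
          (Matrix.fromBlocks A₀ 0 0 A₁) = N₁ * N₂ := by
  have : NeZero m := ⟨by omega⟩
  refine nilpotent_invertible_block_product_of_nilpotents_general (by simp; omega) ?_
  rw [Matrix.det_reindex_self, Matrix.det_fromBlocks_zero₂₁, det_eq_zero_of_isNilpotent hA₀,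
    zero_mul]
end
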